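/- arXiv:1606.04624 — 3 statements merged into one kernel-verified Lean document; each statement's English description precedes it below -/
import Mathlib

section
/- Let E be a type and let g be a real-valued function on multisets over E. For a multiset S and an element x of E, write rho_x(S) = g(S + {x}) - g(S), where S + {x} adds one copy of x to S. Then the following four conditions are equivalent: (1) for all multisets S, T with S <= T (multiset inclusion counting multiplicities) and all x in E, rho_x(S) >= rho_x(T); (2) for all multisets S and all x, y in E, rho_x(S) >= rho_x(S + {y}); (3) for all multisets S and T, g(T) <= g(S) + sum_{x in T - S} rho_x(S) - sum_{x in S - T} rho_x((S ∪ T) - {x}), where T - S denotes multiset difference, S ∪ T denotes the multiset union taking the maximum of the multiplicities, and the sums count elements with their multiplicity in the respective multiset difference; (4) for all multisets S, T with S <= T, g(T) <= g(S) + sum_{x in T - S} rho_x(S). -/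
/-!
Diminishing increments bound the change of `g` along any chain of one-element additions. Going up
from `S` to `S ∪ T`, each increment is at most the one at the bottom `S`. Going up from `T` to
`S ∪ T`, the increment of `x` is at least the one at `(S ∪ T) - {x}`, the largest multiset from
which adding `x` stays below `S ∪ T`. Subtracting the two estimates of `g (S ∪ T)` gives (3);
conversely, (4) for a two-element difference `{y, x}` is already the local condition (2).
-/

open scoped fwdDiff

section Multiset

variable {E : Type*}

theorem add_cons_eq_add_add_singleton (S D : Multiset E) (a : E) :
    S + a ::ₘ D = S + D + {a} := by
  rw [← Multiset.singleton_add, add_comm {a} D, add_assoc]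

theorem union_eq_add_sub [DecidableEq E] (S T : Multiset E) : S ∪ T = T + (S - T) := by
  rw [Multiset.union_def, add_comm]

theorem le_erase_of_add_singleton_le [DecidableEq E] {S U : Multiset E} {a : E}
    (h : S + {a} ≤ U) : S ≤ U.erase a := by
  simpa only [Multiset.sub_singleton] using le_tsub_of_add_le_right h

theorem antitone_multiset_iff_add_singleton_le {α : Type*} [Preorder α] {f : Multiset E → α} :
    Antitone f ↔ ∀ S y, f (S + {y}) ≤ f S := by
  refine ⟨fun hf S y ↦ hf (Multiset.le_add_right S {y}), fun hf S T hST ↦ ?_⟩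
  obtain ⟨D, rfl⟩ := Multiset.le_iff_exists_add.1 hST
  clear hST
  induction D using Multiset.induction_on with
  | empty => rw [add_zero]
  | cons a D ih =>
    rw [add_cons_eq_add_add_singleton]
    exact (hf (S + D) a).trans ih

end Multiset

section Submodular

variable {E M : Type*} [AddCommGroup M] [Preorder M]

/-- Submodularity of a function on multisets, as diminishing increments: the increment
`ρ_x(S) = g (S + {x}) - g S`, written as Mathlib's forward difference `Δ_[{x}] g S`, is antitone
in `S` for every `x`. The quantifier over `x` is the pointwise order on `E → M`. -/
def IsSubmodular (g : Multiset E → M) : Prop :=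
  Antitone fun (S : Multiset E) (x : E) ↦ Δ_[{x}] g S

theorem isSubmodular_iff_fwdDiff_add_singleton_le {g : Multiset E → M} :
    IsSubmodular g ↔ ∀ (S : Multiset E) (x y : E), Δ_[{x}] g (S + {y}) ≤ Δ_[{x}] g S :=
  antitone_multiset_iff_add_singleton_le.trans <| forall_congr' fun _ ↦ forall_comm

namespace IsSubmodular

variable [IsOrderedAddMonoid M] {g : Multiset E → M}

theorem apply_add_le (hg : IsSubmodular g) (S D : Multiset E) :
    g (S + D) ≤ g S + (D.map fun x ↦ Δ_[{x}] g S).sum := by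
  induction D using Multiset.induction_on with
  | empty => simp
  | cons a D ih =>
    have hρ : Δ_[{a}] g (S + D) ≤ Δ_[{a}] g S := hg (Multiset.le_add_right S D) a
    calc g (S + a ::ₘ D) = Δ_[{a}] g (S + D) + g (S + D) := by
          rw [add_cons_eq_add_add_singleton, fwdDiff, sub_add_cancel]
      _ ≤ Δ_[{a}] g S + (g S + (D.map fun x ↦ Δ_[{x}] g S).sum) := add_le_add hρ ih
      _ = g S + ((a ::ₘ D).map fun x ↦ Δ_[{x}] g S).sum := by
          rw [Multiset.map_cons, Multiset.sum_cons, add_left_comm]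

variable [DecidableEq E]

theorem sum_fwdDiff_erase_le (hg : IsSubmodular g) {T D U : Multiset E} (hU : T + D ≤ U) :
    (D.map fun x ↦ Δ_[{x}] g (U.erase x)).sum ≤ g (T + D) - g T := by
  induction D using Multiset.induction_on with
  | empty => simp
  | cons a D ih =>
    rw [add_cons_eq_add_add_singleton] at hU ⊢
    have hTD : T + D ≤ U.erase a := le_erase_of_add_singleton_le hU
    have hρ : Δ_[{a}] g (U.erase a) ≤ Δ_[{a}] g (T + D) := hg hTD a
    calc ((a ::ₘ D).map fun x ↦ Δ_[{x}] g (U.erase x)).sum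
        = Δ_[{a}] g (U.erase a) + (D.map fun x ↦ Δ_[{x}] g (U.erase x)).sum := by
          rw [Multiset.map_cons, Multiset.sum_cons]
      _ ≤ Δ_[{a}] g (T + D) + (g (T + D) - g T) :=
          add_le_add hρ (ih (hTD.trans (U.erase_le a)))
      _ = g (T + D + {a}) - g T := sub_add_sub_cancel _ _ _

theorem apply_le_add_sum_sub_sum (hg : IsSubmodular g) (S T : Multiset E) :
    g T ≤ g S + ((T - S).map fun x ↦ Δ_[{x}] g S).sum
      - ((S - T).map fun x ↦ Δ_[{x}] g ((S ∪ T).erase x)).sum := by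
  have upper : g (S ∪ T) ≤ g S + ((T - S).map fun x ↦ Δ_[{x}] g S).sum := by
    rw [Multiset.union_comm, union_eq_add_sub]
    exact hg.apply_add_le S (T - S)
  have lower : ((S - T).map fun x ↦ Δ_[{x}] g ((S ∪ T).erase x)).sum ≤ g (S ∪ T) - g T := by
    have h := hg.sum_fwdDiff_erase_le (union_eq_add_sub S T).ge
    rwa [← union_eq_add_sub] at h
  exact (le_sub_comm.1 lower).trans (sub_le_sub_right upper _)

end IsSubmodular

theorem fwdDiff_add_singleton_le_of_apply_le_add_sum [DecidableEq E] [IsOrderedAddMonoid M]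
    {g : Multiset E → M}
    (hg : ∀ S T : Multiset E, S ≤ T → g T ≤ g S + ((T - S).map fun x ↦ Δ_[{x}] g S).sum)
    (S : Multiset E) (x y : E) : Δ_[{x}] g (S + {y}) ≤ Δ_[{x}] g S := by
  have h : g (S + {y} + {x}) ≤ g S + (Δ_[{y}] g S + Δ_[{x}] g S) := by
    simpa only [add_assoc, add_tsub_cancel_left, Multiset.map_add, Multiset.sum_add,
      Multiset.map_singleton, Multiset.sum_singleton]
      using hg S (S + ({y} + {x})) (Multiset.le_add_right S _)
  calc Δ_[{x}] g (S + {y}) = g (S + {y} + {x}) - g (S + {y}) := rfl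
    _ ≤ g S + (Δ_[{y}] g S + Δ_[{x}] g S) - g (S + {y}) := sub_le_sub_right h _
    _ = Δ_[{x}] g S := by simp only [fwdDiff]; abel

theorem submodular_multiset_tfae_general [DecidableEq E] [IsOrderedAddMonoid M]
    (g : Multiset E → M) :
    List.TFAE
      [IsSubmodular g,
        ∀ (S : Multiset E) (x y : E), Δ_[{x}] g (S + {y}) ≤ Δ_[{x}] g S,
        ∀ S T : Multiset E,
          g T ≤ g S + ((T - S).map fun x ↦ Δ_[{x}] g S).sum
            - ((S - T).map fun x ↦ Δ_[{x}] g ((S ∪ T).erase x)).sum,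
        ∀ S T : Multiset E, S ≤ T →
          g T ≤ g S + ((T - S).map fun x ↦ Δ_[{x}] g S).sum] := by
  tfae_have 1 ↔ 2 := isSubmodular_iff_fwdDiff_add_singleton_le
  tfae_have 1 → 3 := IsSubmodular.apply_le_add_sum_sub_sum
  tfae_have 3 → 4 := fun h S T hST ↦ by
    simpa only [tsub_eq_zero_of_le hST, Multiset.map_zero, Multiset.sum_zero, sub_zero] using h S T
  tfae_have 4 → 2 := fwdDiff_add_singleton_le_of_apply_le_add_sum
  tfae_finish

end Submodular

/-- Equivalent characterizations of submodularity for a real-valued function `g` on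
multisets over `E`, where `ρ_x(S) = g(S + {x}) - g(S)`:
(1) `ρ_x(S) ≥ ρ_x(T)` for all `S ≤ T` and all `x`;
(2) `ρ_x(S) ≥ ρ_x(S + {y})` for all `S, x, y`;
(3) `g(T) ≤ g(S) + ∑_{x ∈ T-S} ρ_x(S) - ∑_{x ∈ S-T} ρ_x((S ∪ T) - {x})` for all `S, T`;
(4) `g(T) ≤ g(S) + ∑_{x ∈ T-S} ρ_x(S)` for all `S ≤ T`. -/
theorem submodular_multiset_tfae {E : Type*} [DecidableEq E] (g : Multiset E → ℝ) :
    List.TFAE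
      [∀ S T : Multiset E, S ≤ T → ∀ x : E,
          g (T + {x}) - g T ≤ g (S + {x}) - g S,
        ∀ (S : Multiset E) (x y : E),
          g ((S + {y}) + {x}) - g (S + {y}) ≤ g (S + {x}) - g S,
        ∀ S T : Multiset E,
          g T ≤ g S + ((T - S).map (fun x => g (S + {x}) - g S)).sum
            - ((S - T).map (fun x =>
                g ((S ∪ T).erase x + {x}) - g ((S ∪ T).erase x))).sum,
        ∀ S T : Multiset E, S ≤ T →
          g T ≤ g S + ((T - S).map (fun x => g (S + {x}) - g S)).sum] :=
  submodular_multiset_tfae_general g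
end

section
/- Fix sigma_1 > 0, sigma_2 > 0 and sigma_W > 0, and define sigmatilde_i^2(z) = sigma_i^2 * z / (sigma_W^2 / sigma_i^2 + z) for z >= 0 and i = 1, 2. Then the function v(z_1, z_2) = (1/sqrt(2*pi)) * sqrt(sigmatilde_1^2(z_1) + sigmatilde_2^2(z_2)) is submodular on [0, infinity)^2: for all z, z' in [0, infinity)^2 with z <= z' componentwise and all delta in [0, infinity)^2, v(z + delta) - v(z) >= v(z' + delta) - v(z'). -/
/-- `σ̃ᵢ²(z) = σᵢ² z / (σ_W²/σᵢ² + z)`, the reduction in variance of the posterior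
mean of alternative `i` after `z` measurements. -/
noncomputable def sigmatildeSq (σ σW z : ℝ) : ℝ := σ ^ 2 * z / (σW ^ 2 / σ ^ 2 + z)

/-- The value of information of the allocation `(z₁, z₂)` in the two-alternative
case with equal prior means: `v(z₁,z₂) = s(z₁,z₂)/√(2π)` where
`s(z₁,z₂) = √(σ̃₁²(z₁) + σ̃₂²(z₂))`. -/
noncomputable def voiEqualMeans (σ1 σ2 σW z1 z2 : ℝ) : ℝ :=
  (1 / Real.sqrt (2 * Real.pi)) *
    Real.sqrt (sigmatildeSq σ1 σW z1 + sigmatildeSq σ2 σW z2)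

/-!
Each posterior variance reduction `σ̃ᵢ²(z) = σᵢ² - σ_W² / (σ_W²/σᵢ² + z)` is increasing and concave,
so `σ̃₁²(z₁) + σ̃₂²(z₂)` is increasing with diminishing increments. An increasing function with
diminishing increments, such as the square root, preserves this property: starting from a larger
value, a smaller increment of its argument produces a smaller increment.
-/

section SubmodularOn

variable {α β γ : Type*}

/-- Submodularity on `s` in the sense of diminishing returns: an increment `d ≥ 0` gains no more at
a larger starting point. On a product this is stronger than lattice submodularity, since it also
forces diminishing increments along each single coordinate. Membership of all four points is
required explicitly, so that `s` can be an arbitrary set. -/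
def SubmodularOn [AddMonoid α] [Preorder α] [Sub β] [LE β] (f : α → β) (s : Set α) : Prop :=
  ∀ ⦃x y d : α⦄, x ∈ s → y ∈ s → x + d ∈ s → y + d ∈ s → x ≤ y → 0 ≤ d →
    f (y + d) - f y ≤ f (x + d) - f x

theorem submodularOn_of_concaveOn {𝕜 : Type*} [Field 𝕜] [LinearOrder 𝕜] [IsStrictOrderedRing 𝕜]
    [AddCommGroup β] [PartialOrder β] [IsOrderedAddMonoid β] [Module 𝕜 β]
    {f : 𝕜 → β} {s : Set 𝕜} (hf : ConcaveOn 𝕜 s f) : SubmodularOn f s := by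
  intro x y d hx _ _ hyd hxy hd
  rcases (hxy.trans (le_add_of_nonneg_right hd)).eq_or_lt with hx_eq | hx_lt
  · obtain rfl : d = 0 := by linarith
    simp
  have hlen : 0 < y + d - x := sub_pos.2 hx_lt
  -- `y` and `x + d` are mirror images in `[x, y + d]`: they have the same weights, swapped.
  set a := d / (y + d - x) with ha_def
  set b := (y - x) / (y + d - x) with hb_def
  have ha : 0 ≤ a := div_nonneg hd hlen.le
  have hb : 0 ≤ b := div_nonneg (sub_nonneg.2 hxy) hlen.le
  have hab : a + b = 1 := by rw [ha_def, hb_def]; field_simp; ring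
  have hy : a • x + b • (y + d) = y := by
    rw [ha_def, hb_def, smul_eq_mul, smul_eq_mul]; field_simp; ring
  have hxd : b • x + a • (y + d) = x + d := by
    rw [ha_def, hb_def, smul_eq_mul, smul_eq_mul]; field_simp; ring
  rw [sub_le_sub_iff]
  calc f (y + d) + f x
      = (b • f x + a • f (y + d)) + (a • f x + b • f (y + d)) := by
        rw [add_add_add_comm, ← add_smul, ← add_smul, add_comm b, hab, one_smul, one_smul, add_comm]
    _ ≤ f (b • x + a • (y + d)) + f (a • x + b • (y + d)) :=
        add_le_add (hf.2 hx hyd hb ha (by rwa [add_comm])) (hf.2 hx hyd ha hb hab)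
    _ = f (x + d) + f y := by rw [hxd, hy]

namespace SubmodularOn

theorem const_mul {R : Type*} [AddMonoid α] [Preorder α] [Ring R] [PartialOrder R]
    [PosMulMono R] {f : α → R} {s : Set α} (hf : SubmodularOn f s) {c : R} (hc : 0 ≤ c) :
    SubmodularOn (fun x ↦ c * f x) s := by
  intro x y d hx hy hxd hyd hxy hd
  simpa only [mul_sub] using mul_le_mul_of_nonneg_left (hf hx hy hxd hyd hxy hd) hc

theorem add_prod [AddMonoid α] [Preorder α] [AddMonoid β] [Preorder β]
    [AddCommGroup γ] [PartialOrder γ] [IsOrderedAddMonoid γ]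
    {f : α → γ} {s : Set α} {g : β → γ} {t : Set β}
    (hf : SubmodularOn f s) (hg : SubmodularOn g t) :
    SubmodularOn (fun p : α × β ↦ f p.1 + g p.2) (s ×ˢ t) := by
  intro x y d hx hy hxd hyd hxy hd
  simpa only [add_sub_add_comm, Prod.fst_add, Prod.snd_add] using
    add_le_add (hf hx.1 hy.1 hxd.1 hyd.1 hxy.1 hd.1) (hg hx.2 hy.2 hxd.2 hyd.2 hxy.2 hd.2)

theorem comp [AddMonoid α] [Preorder α] [AddLeftMono α]
    [AddCommGroup β] [PartialOrder β] [IsOrderedAddMonoid β]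
    [AddCommGroup γ] [PartialOrder γ] [IsOrderedAddMonoid γ]
    {g : β → γ} {t : Set β} {f : α → β} {s : Set α}
    (hg : SubmodularOn g t) (hg_mono : MonotoneOn g t) (ht : t.OrdConnected)
    (hf : SubmodularOn f s) (hf_mono : MonotoneOn f s) (hst : Set.MapsTo f s t) :
    SubmodularOn (g ∘ f) s := by
  intro x y d hx hy hxd hyd hxy hd
  set e := f (y + d) - f y
  have he : 0 ≤ e := sub_nonneg.2 (hf_mono hy hyd (le_add_of_nonneg_right hd))
  have hfy : f y + e = f (y + d) := add_sub_cancel _ _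
  have hfx : f x + e ≤ f (x + d) := le_sub_iff_add_le'.1 (hf hx hy hxd hyd hxy hd)
  have hfx_mem : f x + e ∈ t := ht.out (hst hx) (hst hxd) ⟨le_add_of_nonneg_right he, hfx⟩
  calc g (f (y + d)) - g (f y)
      = g (f y + e) - g (f y) := by rw [hfy]
    _ ≤ g (f x + e) - g (f x) :=
        hg (hst hx) (hst hy) hfx_mem (hfy ▸ hst hyd) (hf_mono hx hy hxy) he
    _ ≤ g (f (x + d)) - g (f x) := sub_le_sub_right (hg_mono hfx_mem (hst hxd) hfx) _

end SubmodularOn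

end SubmodularOn

section SigmatildeSq

variable {σ σW z : ℝ}

theorem sigmatildeSq_nonneg (hz : 0 ≤ z) : 0 ≤ sigmatildeSq σ σW z := by
  unfold sigmatildeSq
  positivity

theorem sigmatildeSq_eq_sub (hσ : σ ≠ 0) (hσW : σW ≠ 0) (hz : 0 ≤ z) :
    sigmatildeSq σ σW z = σ ^ 2 - σW ^ 2 * (σW ^ 2 / σ ^ 2 + z)⁻¹ := by
  have hden : σW ^ 2 / σ ^ 2 + z ≠ 0 := by positivity
  have hσW_sq : σW ^ 2 = σ ^ 2 * (σW ^ 2 / σ ^ 2) := by field_simp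
  rw [sigmatildeSq, ← div_eq_mul_inv, eq_sub_iff_add_eq, ← add_div, div_eq_iff hden, mul_add,
    ← hσW_sq, add_comm]

theorem monotoneOn_sigmatildeSq (hσ : σ ≠ 0) (hσW : σW ≠ 0) :
    MonotoneOn (sigmatildeSq σ σW) (Set.Ici 0) := by
  intro x (hx : 0 ≤ x) y hy hxy
  rw [sigmatildeSq_eq_sub hσ hσW hx, sigmatildeSq_eq_sub hσ hσW hy]
  gcongr

theorem concaveOn_sigmatildeSq (hσ : σ ≠ 0) (hσW : σW ≠ 0) :
    ConcaveOn ℝ (Set.Ici 0) (sigmatildeSq σ σW) := by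
  have hratio : 0 < σW ^ 2 / σ ^ 2 := by positivity
  have hinv : ConvexOn ℝ (Set.Ioi 0) fun z : ℝ ↦ z⁻¹ := by
    simpa only [zpow_neg_one] using convexOn_zpow (𝕜 := ℝ) (-1)
  have hshift : ConvexOn ℝ (Set.Ici 0) fun z : ℝ ↦ (σW ^ 2 / σ ^ 2 + z)⁻¹ :=
    (hinv.translate_right _).subset (fun _ hz ↦ add_pos_of_pos_of_nonneg hratio hz) (convex_Ici 0)
  exact ((concaveOn_const (σ ^ 2) (convex_Ici 0)).sub (hshift.smul (sq_nonneg σW))).congr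
    fun _ hz ↦ (sigmatildeSq_eq_sub hσ hσW hz).symm

end SigmatildeSq

/-- The value of information `v(z₁,z₂) = s(z₁,z₂)/√(2π)` is submodular on
`[0,∞)²`: for `0 ≤ z ≤ z'` componentwise and `δ ≥ 0` componentwise,
`v(z+δ) - v(z) ≥ v(z'+δ) - v(z')`. -/
theorem voi_equal_means_submodular (σ1 σ2 σW : ℝ)
    (h1 : 0 < σ1) (h2 : 0 < σ2) (hW : 0 < σW) :
    ∀ z1 z2 z1' z2' δ1 δ2 : ℝ,
      0 ≤ z1 → 0 ≤ z2 → z1 ≤ z1' → z2 ≤ z2' → 0 ≤ δ1 → 0 ≤ δ2 →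
      voiEqualMeans σ1 σ2 σW (z1' + δ1) (z2' + δ2) - voiEqualMeans σ1 σ2 σW z1' z2' ≤
      voiEqualMeans σ1 σ2 σW (z1 + δ1) (z2 + δ2) - voiEqualMeans σ1 σ2 σW z1 z2 := by
  intro z1 z2 z1' z2' δ1 δ2 hz1 hz2 hzz1 hzz2 hδ1 hδ2
  have hsub {σ : ℝ} (hσ : 0 < σ) : SubmodularOn (sigmatildeSq σ σW) (Set.Ici 0) :=
    submodularOn_of_concaveOn (concaveOn_sigmatildeSq hσ.ne' hW.ne')
  have hmono : MonotoneOn (fun p : ℝ × ℝ ↦ sigmatildeSq σ1 σW p.1 + sigmatildeSq σ2 σW p.2)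
      (Set.Ici 0 ×ˢ Set.Ici 0) := fun _ hp _ hq hpq ↦
    add_le_add (monotoneOn_sigmatildeSq h1.ne' hW.ne' hp.1 hq.1 hpq.1)
      (monotoneOn_sigmatildeSq h2.ne' hW.ne' hp.2 hq.2 hpq.2)
  have hsqrt : SubmodularOn Real.sqrt (Set.Ici 0) :=
    submodularOn_of_concaveOn Real.strictConcaveOn_sqrt.concaveOn
  have hvoi : SubmodularOn (fun p : ℝ × ℝ ↦ voiEqualMeans σ1 σ2 σW p.1 p.2)
      (Set.Ici 0 ×ˢ Set.Ici 0) :=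
    (hsqrt.comp (Real.sqrt_monotone.monotoneOn _) Set.ordConnected_Ici
      ((hsub h1).add_prod (hsub h2)) hmono fun _ hp ↦
        add_nonneg (sigmatildeSq_nonneg hp.1) (sigmatildeSq_nonneg hp.2)).const_mul (by positivity)
  have hz1' := hz1.trans hzz1
  have hz2' := hz2.trans hzz2
  exact hvoi (x := (z1, z2)) (y := (z1', z2')) (d := (δ1, δ2)) ⟨hz1, hz2⟩ ⟨hz1', hz2'⟩
    ⟨add_nonneg hz1 hδ1, add_nonneg hz2 hδ2⟩ ⟨add_nonneg hz1' hδ1, add_nonneg hz2' hδ2⟩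
    ⟨hzz1, hzz2⟩ ⟨hδ1, hδ2⟩
end

section
/- Fix sigma_1 > 0, sigma_2 > 0, sigma_W > 0 and c >= 0. Define sigmatilde_i^2(z) = sigma_i^2 * z / (sigma_W^2 / sigma_i^2 + z), sigmatilde_i(z) = sqrt(sigmatilde_i^2(z)), s(z_1, z_2) = sqrt(sigmatilde_1^2(z_1) + sigmatilde_2^2(z_2)), and v(z_1, z_2) = s(z_1, z_2) * f(-c / s(z_1, z_2)), where f(a) = a*Phi(a) + phi(a) with Phi the standard normal cumulative distribution function and phi the standard normal density. Then for all z_1 > 0 and z_2 > 0, the mixed second partial derivative of v satisfies d^2 v / (dz_1 dz_2) = (sigmatilde_1(z_1) * sigmatilde_1'(z_1) * sigmatilde_2(z_2) * sigmatilde_2'(z_2) / s(z_1,z_2)^3) * phi(-c / s(z_1,z_2)) * (c^2 / (sigmatilde_1^2(z_1) + sigmatilde_2^2(z_2)) - 1), where sigmatilde_i' denotes the derivative of sigmatilde_i. -/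
/-- The standard normal density `φ(ζ) = exp(-ζ²/2)/√(2π)`. -/
noncomputable def stdGaussPDF (ζ : ℝ) : ℝ :=
  (1 / Real.sqrt (2 * Real.pi)) * Real.exp (-ζ ^ 2 / 2)

/-- The standard normal cumulative distribution function `Φ(ζ) = ∫_{-∞}^ζ φ`. -/
noncomputable def stdGaussCDF (ζ : ℝ) : ℝ := ∫ t in Set.Iic ζ, stdGaussPDF t

/-- `f(a) = a·Φ(a) + φ(a)`. -/
noncomputable def fKG (a : ℝ) : ℝ := a * stdGaussCDF a + stdGaussPDF a

/-- `σ̃ᵢ(z) = √(σ̃ᵢ²(z))`. -/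
noncomputable def sigmatilde (σ σW z : ℝ) : ℝ := Real.sqrt (sigmatildeSq σ σW z)

/-- `s(z₁,z₂) = √(σ̃₁²(z₁) + σ̃₂²(z₂))`. -/
noncomputable def sAlloc (σ1 σ2 σW z1 z2 : ℝ) : ℝ :=
  Real.sqrt (sigmatildeSq σ1 σW z1 + sigmatildeSq σ2 σW z2)

/-- The value of information `v(z₁,z₂) = s(z₁,z₂)·f(-c/s(z₁,z₂))` of the
allocation `(z₁,z₂)`, with `c = |θ₁⁰ - θ₂⁰|`. -/
noncomputable def voi (σ1 σ2 σW c z1 z2 : ℝ) : ℝ :=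
  sAlloc σ1 σ2 σW z1 z2 * fKG (-c / sAlloc σ1 σ2 σW z1 z2)

/- The value of information depends on the allocation only through the sum of the two variances:
`v = G (p z₁ + q z₂)` with `p = σ̃₁²`, `q = σ̃₂²` and `G r = √r f(-c/√r)`, so its mixed partial
derivative is `p' q' G''`. Since `f' = Φ`, the terms in `Φ` cancel in `G'` and leave
`G' r = φ(-c/√r) / (2√r)`, whose derivative is elementary because `φ'(x) = -x φ(x)`. Finally
`p' = 2 σ̃₁ σ̃₁'` and `q' = 2 σ̃₂ σ̃₂'`. -/

open MeasureTheory Set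
open scoped Topology

section Calculus

theorem hasDerivAt_integral_Iic {E : Type*} [NormedAddCommGroup E] [NormedSpace ℝ E]
    [CompleteSpace E] {f : ℝ → E} {x : ℝ} (hf : ∀ y, IntegrableOn f (Iic y))
    (hcont : ContinuousAt f x) : HasDerivAt (fun y => ∫ t in Iic y, f t) (f x) x := by
  have split_at_zero (y : ℝ) : ∫ t in Iic y, f t = (∫ t in (0 : ℝ)..y, f t) + ∫ t in Iic 0, f t :=
    sub_eq_iff_eq_add.mp (intervalIntegral.integral_Iic_sub_Iic (hf 0) (hf y))
  have intervalIntegrable : IntervalIntegrable f volume 0 x :=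
    ⟨(hf x).mono_set Ioc_subset_Iic_self, (hf 0).mono_set Ioc_subset_Iic_self⟩
  have measurable_near : StronglyMeasurableAtFilter f (𝓝 x) :=
    ⟨Iic (x + 1), Iic_mem_nhds (lt_add_one x), (hf (x + 1)).aestronglyMeasurable⟩
  rw [funext split_at_zero]
  exact (intervalIntegral.integral_hasDerivAt_right intervalIntegrable measurable_near
    hcont).add_const _

theorem hasDerivAt_deriv_comp_add {𝕜 : Type*} [NontriviallyNormedField 𝕜]
    {G G' p q : 𝕜 → 𝕜} {G'' p' q' x y : 𝕜}
    (hG : ∀ᶠ r in 𝓝 (p x + q y), HasDerivAt G (G' r) r)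
    (hG' : HasDerivAt G' G'' (p x + q y)) (hp : HasDerivAt p p' x) (hq : HasDerivAt q q' y) :
    HasDerivAt (fun b => deriv (fun a => G (p a + q b)) x) (G'' * q' * p') y := by
  have inner_deriv : (fun b => deriv (fun a => G (p a + q b)) x) =ᶠ[𝓝 y]
      fun b => G' (p x + q b) * p' := by
    filter_upwards [(hq.continuousAt.const_add (p x)).eventually hG] with b hb
    exact (hb.comp x (hp.add_const (q b))).deriv
  exact ((hG'.comp y (hq.const_add (p x))).mul_const p').congr_of_eventuallyEq inner_deriv

theorem sqrt_mul_deriv_sqrt {p : ℝ → ℝ} {x : ℝ} (hp : DifferentiableAt ℝ p x) (hx : 0 < p x) :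
    √(p x) * deriv (fun z => √(p z)) x = deriv p x / 2 := by
  rw [deriv_sqrt hp hx.ne']
  field_simp

theorem hasDerivAt_div_sqrt (c : ℝ) {q : ℝ} (hq : 0 < q) :
    HasDerivAt (fun r => c / √r) (-c / (2 * √q ^ 3)) q := by
  refine ((hasDerivAt_const q c).fun_div (Real.hasDerivAt_sqrt hq.ne')
    (Real.sqrt_ne_zero'.mpr hq)).congr_deriv ?_
  field_simp
  ring

end Calculus

section Gaussian

theorem stdGaussPDF_eq_gaussianPDFReal : stdGaussPDF = ProbabilityTheory.gaussianPDFReal 0 1 := by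
  ext x
  simp [stdGaussPDF, ProbabilityTheory.gaussianPDFReal]

theorem integrable_stdGaussPDF : Integrable stdGaussPDF :=
  stdGaussPDF_eq_gaussianPDFReal ▸ ProbabilityTheory.integrable_gaussianPDFReal 0 1

theorem hasDerivAt_stdGaussPDF (x : ℝ) : HasDerivAt stdGaussPDF (-x * stdGaussPDF x) x := by
  have exponent_deriv : HasDerivAt (fun y : ℝ => -y ^ 2 / 2) (-x) x :=
    ((hasDerivAt_pow 2 x).fun_neg.div_const 2).congr_deriv (by ring)
  exact (exponent_deriv.exp.const_mul (1 / √(2 * Real.pi))).congr_deriv (by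
    rw [stdGaussPDF]
    ring)

theorem hasDerivAt_stdGaussCDF (x : ℝ) : HasDerivAt stdGaussCDF (stdGaussPDF x) x :=
  hasDerivAt_integral_Iic (fun _ => integrable_stdGaussPDF.integrableOn)
    (hasDerivAt_stdGaussPDF x).continuousAt

theorem hasDerivAt_fKG (x : ℝ) : HasDerivAt fKG (stdGaussCDF x) x :=
  (((hasDerivAt_id' x).fun_mul (hasDerivAt_stdGaussCDF x)).fun_add
    (hasDerivAt_stdGaussPDF x)).congr_deriv (by ring)

end Gaussian

/-- The value of information as a function of the variance `q` of the difference of the posterior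
means: `voiOfVariance c q = E[max(√q Z - c, 0)]` for `Z` standard normal and `q > 0`. -/
noncomputable def voiOfVariance (c q : ℝ) : ℝ := √q * fKG (-c / √q)

section VoiOfVariance

variable (c : ℝ) {q : ℝ}

theorem hasDerivAt_voiOfVariance (hq : 0 < q) :
    HasDerivAt (voiOfVariance c) (stdGaussPDF (-c / √q) / (2 * √q)) q := by
  refine ((Real.hasDerivAt_sqrt hq.ne').fun_mul
    ((hasDerivAt_fKG (-c / √q)).comp q (hasDerivAt_div_sqrt (-c) hq))).congr_deriv ?_
  simp only [fKG, Function.comp_apply]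
  field_simp
  ring

theorem hasDerivAt_stdGaussPDF_div_sqrt (hq : 0 < q) :
    HasDerivAt (fun r => stdGaussPDF (-c / √r) / (2 * √r))
      (stdGaussPDF (-c / √q) / (4 * √q ^ 3) * (c ^ 2 / q - 1)) q := by
  refine (((hasDerivAt_stdGaussPDF (-c / √q)).comp q (hasDerivAt_div_sqrt (-c) hq)).fun_div
    ((Real.hasDerivAt_sqrt hq.ne').const_mul 2) (by positivity)).congr_deriv ?_
  have variance_eq_sq : c ^ 2 / q = c ^ 2 / √q ^ 2 := by rw [Real.sq_sqrt hq.le]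
  rw [variance_eq_sq, Function.comp_apply]
  field_simp
  ring

end VoiOfVariance

theorem sigmatildeSq_pos {σ : ℝ} (σW : ℝ) {z : ℝ} (hσ : σ ≠ 0) (hz : 0 < z) :
    0 < sigmatildeSq σ σW z := by
  unfold sigmatildeSq
  positivity

theorem differentiableAt_sigmatildeSq (σ σW : ℝ) {z : ℝ} (hz : 0 < z) :
    DifferentiableAt ℝ (sigmatildeSq σ σW) z := by
  have denom_ne_zero : σW ^ 2 / σ ^ 2 + z ≠ 0 := by positivity
  unfold sigmatildeSq
  fun_prop (disch := assumption)

theorem voi_mixed_partial_general (c : ℝ) {p q : ℝ → ℝ} {z1 z2 : ℝ}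
    (hp : DifferentiableAt ℝ p z1) (hq : DifferentiableAt ℝ q z2)
    (hp_pos : 0 < p z1) (hq_pos : 0 < q z2) :
    HasDerivAt (fun b => deriv (fun a => voiOfVariance c (p a + q b)) z1)
      (√(p z1) * deriv (fun z => √(p z)) z1 * √(q z2) * deriv (fun z => √(q z)) z2 /
        √(p z1 + q z2) ^ 3 * stdGaussPDF (-c / √(p z1 + q z2)) *
        (c ^ 2 / (p z1 + q z2) - 1)) z2 := by
  have sum_pos : 0 < p z1 + q z2 := add_pos hp_pos hq_pos
  have first_deriv : ∀ᶠ r in 𝓝 (p z1 + q z2),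
      HasDerivAt (voiOfVariance c) (stdGaussPDF (-c / √r) / (2 * √r)) r :=
    (lt_mem_nhds sum_pos).mono fun _ => hasDerivAt_voiOfVariance c
  refine (hasDerivAt_deriv_comp_add first_deriv (hasDerivAt_stdGaussPDF_div_sqrt c sum_pos)
    hp.hasDerivAt hq.hasDerivAt).congr_deriv ?_
  rw [sqrt_mul_deriv_sqrt hp hp_pos, mul_assoc (deriv p z1 / 2), sqrt_mul_deriv_sqrt hq hq_pos]
  ring

/-- The mixed second partial derivative of the value of information:
`∂²v/∂z₁∂z₂ = (σ̃₁ σ̃₁' σ̃₂ σ̃₂' / s³) · φ(-c/s) · (c²/(σ̃₁² + σ̃₂²) - 1)`. -/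
theorem voi_mixed_partial (σ1 σ2 σW c : ℝ)
    (h1 : 0 < σ1) (h2 : 0 < σ2) (hW : 0 < σW) (hc : 0 ≤ c) :
    ∀ z1 z2 : ℝ, 0 < z1 → 0 < z2 →
      deriv (fun b => deriv (fun a => voi σ1 σ2 σW c a b) z1) z2 =
        sigmatilde σ1 σW z1 * deriv (sigmatilde σ1 σW) z1 *
          sigmatilde σ2 σW z2 * deriv (sigmatilde σ2 σW) z2 /
          (sAlloc σ1 σ2 σW z1 z2) ^ 3 *
          stdGaussPDF (-c / sAlloc σ1 σ2 σW z1 z2) *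
          (c ^ 2 / (sigmatildeSq σ1 σW z1 + sigmatildeSq σ2 σW z2) - 1) := by
  intro z1 z2 hz1 hz2
  exact (voi_mixed_partial_general c
    (differentiableAt_sigmatildeSq σ1 σW hz1) (differentiableAt_sigmatildeSq σ2 σW hz2)
    (sigmatildeSq_pos σW h1.ne' hz1) (sigmatildeSq_pos σW h2.ne' hz2)).deriv
end
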